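/- Let 𝒫 = ∏_{j=1}^d 𝒫_j be a product class of distributions on 𝒳 = ∏_{j=1}^d 𝒳_j, i.e. every P ∈ 𝒫 has the form P = ∏_{j=1}^d P_j with P_j ∈ 𝒫_j for each j, and all such products belong to 𝒫. Then for every even integer n ≥ 2 and every integer m ≥ 0, the minimax sample-amplification error satisfies ε*(𝒫,n,m) ≤ sqrt( (m²/n) · Σ_{j=1}^d r_{χ²}(𝒫_j, n/2) ). -/

import Mathlib

open MeasureTheory ProbabilityTheory
open scoped ENNReal NNReal Classical

/-- Total variation distance between two measures: `sup_A |P(A) - Q(A)|`. -/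
noncomputable def tvDist {X : Type*} [MeasurableSpace X] (μ ν : Measure X) : ℝ :=
  ⨆ A : {s : Set X // MeasurableSet s}, |(μ A).toReal - (ν A).toReal|

/-- Minimax sample amplification error `ε*(𝒫, n, m)` for the family `(P θ)_θ`. -/
noncomputable def ampErr {X Θ : Type*} [MeasurableSpace X] (P : Θ → Measure X)
    (n m : ℕ) : ℝ :=
  ⨅ T : {T : Kernel (Fin n → X) (Fin (n + m) → X) // IsMarkovKernel T},
    ⨆ θ : Θ, tvDist (Measure.pi fun _ : Fin (n + m) => P θ)
      ((Measure.pi fun _ : Fin n => P θ).bind T.1)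

/-- The chi-squared divergence `χ²(P‖Q) = ∫ (dP/dQ - 1)² dQ` if `P ≪ Q`, `∞` otherwise. -/
noncomputable def chiSqDiv {X : Type*} [MeasurableSpace X] (P Q : Measure X) : ℝ≥0∞ :=
  if P ≪ Q then ∫⁻ x, ENNReal.ofReal (((P.rnDeriv Q x).toReal - 1) ^ 2) ∂Q else ⊤

/-- The `χ²`-estimation error `r_{χ²}(𝒫, n)`: the minimax risk of estimating the
distribution under expected chi-squared divergence from `n` i.i.d. samples. -/
noncomputable def chiSqRisk {X Θ : Type*} [MeasurableSpace X] (P : Θ → Measure X)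
    (n : ℕ) : ℝ≥0∞ :=
  ⨅ est : {κ : Kernel (Fin n → X) X // IsMarkovKernel κ},
    ⨆ θ : Θ, ∫⁻ x, chiSqDiv ((est.1) x) (P θ) ∂(Measure.pi fun _ : Fin n => P θ)

theorem exp_two_mul_sq_le_one_add {t : ℝ} (h0 : 0 ≤ t) (h1 : t ≤ 1 / 2) :
    Real.exp (2 * t ^ 2) ≤ 1 + 4 * t ^ 2 := by
  have h := Real.abs_exp_sub_one_sub_id_le (x := 2 * t ^ 2)
    (by rw [abs_of_nonneg (by positivity)]; nlinarith)
  have := (abs_le.1 h).2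
  nlinarith [sq_nonneg t, mul_nonneg (sq_nonneg t) (sq_nonneg t), mul_self_le_mul_self h0 h1]

theorem two_mul_sq_le_neg_log_one_sub {t : ℝ} (h0 : 0 ≤ t) (h1 : t < 1) :
    2 * t ^ 2 ≤ -Real.log (1 - t) := by
  have hd : ∀ x ∈ Set.Ico (0 : ℝ) 1,
      HasDerivAt (fun y => -Real.log (1 - y) - 2 * y ^ 2) (1 / (1 - x) - 4 * x) x := by
    intro x hx
    have h1 : (1 : ℝ) - x ≠ 0 := by linarith [hx.2]
    have h2 : HasDerivAt (fun y => -Real.log (1 - y) - 2 * y ^ 2) _ x :=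
      (((hasDerivAt_id x).const_sub 1).log h1).neg.sub (((hasDerivAt_id x).pow 2).const_mul 2)
    exact h2.congr_deriv (by simp; ring)
  have hmono : MonotoneOn (fun y => -Real.log (1 - y) - 2 * y ^ 2) (Set.Ico (0 : ℝ) 1) := by
    refine monotoneOn_of_deriv_nonneg (convex_Ico 0 1)
      (fun x hx => (hd x hx).continuousAt.continuousWithinAt)
      (fun x hx => (hd x (interior_subset hx)).differentiableAt.differentiableWithinAt) ?_
    intro x hx
    have hx' := interior_subset hx
    rw [(hd x hx').deriv]
    have h1 : 0 < 1 - x := by linarith [hx'.2]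
    rw [sub_nonneg, le_div_iff₀ h1]
    nlinarith [sq_nonneg (1 - 2 * x)]
  have := hmono ⟨le_rfl, one_pos⟩ ⟨h0, h1⟩ h0
  simp at this
  linarith

theorem two_mul_sq_sub_le {a q s : ℝ} (hs : 0 ≤ s) (ha : 0 ≤ a) (hq : q ≤ 1) (haq : a ≤ q)
    (h : (q - a) ^ 2 ≤ a * (1 - a) * (Real.exp s - 1)) : 2 * (q - a) ^ 2 ≤ s := by
  obtain ⟨t, rfl⟩ : ∃ t, q = a + t := ⟨q - a, by ring⟩
  simp only [add_sub_cancel_left] at h ⊢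
  have ht : 0 ≤ t := by linarith
  rcases ht.eq_or_lt with rfl | ht0
  · simpa using hs
  have hE : 0 < Real.exp s - 1 := by
    by_contra! hE
    nlinarith [mul_nonneg ha (by linarith : 0 ≤ 1 - a)]
  rw [← Real.exp_le_exp]
  rcases le_total t (1 / 2) with h2 | h2
  · refine (exp_two_mul_sq_le_one_add ht h2).trans ?_
    nlinarith [sq_nonneg (1 - 2 * a)]
  · have h3 : a * (1 - a) ≤ (1 - t) * t := by nlinarith
    have h4 : t ≤ (1 - t) * (Real.exp s - 1) := by
      have : t * t ≤ t * ((1 - t) * (Real.exp s - 1)) := by nlinarith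
      exact le_of_mul_le_mul_left this ht0
    have h5 : t < 1 := by
      by_contra! h5
      nlinarith
    have h6 := Real.exp_le_exp.2 (two_mul_sq_le_neg_log_one_sub ht h5)
    rw [Real.exp_neg, Real.exp_log (by linarith)] at h6
    refine h6.trans ?_
    rw [inv_le_iff_one_le_mul₀ (by linarith)]
    linarith

theorem lintegral_pi_prod {ι : Type*} [Fintype ι] {Y : ι → Type*} [∀ i, MeasurableSpace (Y i)]
    (μ : ∀ i, Measure (Y i)) [∀ i, IsProbabilityMeasure (μ i)] {f : ∀ i, Y i → ℝ≥0∞}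
    (hf : ∀ i, Measurable (f i)) :
    ∫⁻ x, ∏ i, f i (x i) ∂Measure.pi μ = ∏ i, ∫⁻ y, f i y ∂μ i := by
  have h : iIndepFun (fun i (x : ∀ i, Y i) => f i (x i)) (Measure.pi μ) :=
    iIndepFun_pi fun i => (hf i).aemeasurable
  have h2 := lintegral_prod_eq_prod_lintegral_of_indepFun Finset.univ _ h fun i =>
    (hf i).comp (measurable_pi_apply i)
  refine h2.trans (Finset.prod_congr rfl fun i _ => ?_)
  exact (measurePreserving_eval μ i).lintegral_comp (hf i)

theorem lintegral_pi_le_sum_of_le_sum {ι : Type*} [Fintype ι] {Y : ι → Type*}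
    [∀ i, MeasurableSpace (Y i)]
    (μ : ∀ i, Measure (Y i)) [∀ i, IsProbabilityMeasure (μ i)] {g : (∀ i, Y i) → ℝ≥0∞}
    (hg : Measurable g) {f : ∀ i, Y i → ℝ≥0∞} (hgf : ∀ x, g x ≤ ∑ i, f i (x i)) :
    ∫⁻ x, g x ∂Measure.pi μ ≤ ∑ i, ∫⁻ y, f i y ∂μ i := by
  have key : ∀ (s : Finset ι) (x : ∀ i, Y i),
      (∫⋯∫⁻_s, g ∂μ) x ≤ ∑ i ∈ s, ∫⁻ y, f i y ∂μ i + ∑ i ∈ sᶜ, f i (x i) := by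
    intro s
    induction s using Finset.induction with
    | empty => simpa using hgf
    | insert i s hi ih =>
      intro x
      rw [lmarginal_insert g hg hi]
      have hc : sᶜ = insert i (insert i s)ᶜ := by
        ext k
        by_cases hk : k = i <;> simp [hk, hi]
      calc ∫⁻ y, (∫⋯∫⁻_s, g ∂μ) (Function.update x i y) ∂μ i
          ≤ ∫⁻ y, (f i y + (∑ i ∈ s, ∫⁻ y, f i y ∂μ i
              + ∑ k ∈ (insert i s)ᶜ, f k (x k))) ∂μ i := by
            refine lintegral_mono fun y => (ih _).trans (le_of_eq ?_)
            rw [hc, Finset.sum_insert (by simp), Function.update_self, add_left_comm]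
            congr 2
            refine Finset.sum_congr rfl fun k hk => ?_
            rw [Function.update_of_ne (by rintro rfl; simp at hk)]
        _ = _ := by
            rw [lintegral_add_right _ measurable_const, lintegral_const, measure_univ, mul_one,
              Finset.sum_insert hi, add_assoc]
  obtain ⟨x⟩ : Nonempty (∀ i, Y i) := nonempty_of_isProbabilityMeasure (Measure.pi μ)
  simpa using key Finset.univ x

theorem sq_lintegral_le {Ω : Type*} [MeasurableSpace Ω] (ν : Measure Ω) {g : Ω → ℝ≥0∞}
    (hg : AEMeasurable g ν) : (∫⁻ x, g x ∂ν) ^ 2 ≤ ν Set.univ * ∫⁻ x, g x ^ 2 ∂ν := by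
  have h := ENNReal.lintegral_mul_le_Lp_mul_Lq ν Real.HolderConjugate.two_two hg
    (aemeasurable_const (b := (1 : ℝ≥0∞)))
  simp only [Pi.mul_apply, mul_one, lintegral_const, ENNReal.rpow_two] at h
  have h2 := pow_le_pow_left' h 2
  rw [mul_pow, ← ENNReal.rpow_two, ← ENNReal.rpow_two, ← ENNReal.rpow_two, ← ENNReal.rpow_mul,
    ← ENNReal.rpow_mul] at h2
  rw [← ENNReal.rpow_two, mul_comm]
  simpa using h2

theorem lintegral_mul_le_lintegral_add_of_lintegral_sq_le {Ω : Type*} [MeasurableSpace Ω]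
    (μ : Measure Ω) [IsProbabilityMeasure μ] {D f : Ω → ℝ≥0∞} (hD : Measurable D)
    (hf : Measurable f) (hf1 : ∀ x, f x ≤ 1) (hD1 : ∫⁻ x, D x ∂μ = 1) {s : ℝ} (hs : 0 ≤ s)
    (hD2 : ∫⁻ x, D x ^ 2 ∂μ ≤ ENNReal.ofReal (Real.exp s)) :
    ∫⁻ x, f x * D x ∂μ ≤ ∫⁻ x, f x ∂μ + ENNReal.ofReal √(s / 2) := by
  have hcs : ∀ {φ : Ω → ℝ≥0∞}, Measurable φ →
      (∫⁻ x, φ x * D x ∂μ) ^ 2 ≤ (∫⁻ x, φ x ∂μ) * ∫⁻ x, φ x * D x ^ 2 ∂μ := by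
    intro φ hφ
    have h := sq_lintegral_le (μ.withDensity φ) hD.aemeasurable
    rwa [withDensity_apply _ MeasurableSet.univ, Measure.restrict_univ,
      lintegral_withDensity_eq_lintegral_mul _ hφ hD,
      lintegral_withDensity_eq_lintegral_mul _ hφ (hD.pow_const 2)] at h
  have hg : Measurable fun x => 1 - f x := measurable_const.sub hf
  have hsplit : ∀ {φ : Ω → ℝ≥0∞}, Measurable φ →
      ∫⁻ x, f x * φ x ∂μ + ∫⁻ x, (1 - f x) * φ x ∂μ = ∫⁻ x, φ x ∂μ := by
    intro φ hφ
    rw [← lintegral_add_left (f := fun x => f x * φ x) (hf.mul hφ)]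
    refine lintegral_congr fun x => ?_
    rw [← add_mul, add_tsub_cancel_of_le (hf1 x), one_mul]
  have h1 := hcs hf
  have h2 := hcs hg
  have e1 := hsplit (measurable_const (a := (1 : ℝ≥0∞)))
  have e2 := hsplit hD
  have e3 := hsplit (hD.pow_const 2)
  simp only [mul_one, lintegral_const, measure_univ] at e1
  rw [hD1] at e2
  rw [← e3] at hD2
  generalize (∫⁻ x, f x ∂μ) = a at *
  generalize (∫⁻ x, 1 - f x ∂μ) = a' at *
  generalize (∫⁻ x, f x * D x ∂μ) = q at *
  generalize (∫⁻ x, (1 - f x) * D x ∂μ) = q' at *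
  generalize (∫⁻ x, f x * D x ^ 2 ∂μ) = u at *
  generalize (∫⁻ x, (1 - f x) * D x ^ 2 ∂μ) = v at *
  have hfin : ∀ {x y z : ℝ≥0∞}, x + y ≤ z → z ≠ ⊤ → x ≠ ⊤ ∧ y ≠ ⊤ := fun h hz =>
    ENNReal.add_ne_top.1 (ne_top_of_le_ne_top hz h)
  obtain ⟨ha, ha'⟩ := hfin e1.le ENNReal.one_ne_top
  obtain ⟨hq, hq'⟩ := hfin e2.le ENNReal.one_ne_top
  obtain ⟨hu, hv⟩ := hfin hD2 ENNReal.ofReal_ne_top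
  lift a to ℝ≥0 using ha
  lift a' to ℝ≥0 using ha'
  lift q to ℝ≥0 using hq
  lift q' to ℝ≥0 using hq'
  lift u to ℝ≥0 using hu
  lift v to ℝ≥0 using hv
  have e1' : (a : ℝ) + a' = 1 := mod_cast e1
  have e2' : (q : ℝ) + q' = 1 := mod_cast e2
  have h1' : (q : ℝ) ^ 2 ≤ a * u := mod_cast h1
  have h2' : (q' : ℝ) ^ 2 ≤ a' * v := mod_cast h2
  have h3' : (u : ℝ) + v ≤ Real.exp s := by
    rw [ENNReal.le_ofReal_iff_toReal_le (by simp) (Real.exp_pos s).le,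
      ENNReal.toReal_add (by simp) (by simp)] at hD2
    exact hD2
  rw [← ENNReal.ofReal_coe_nnreal, ← ENNReal.ofReal_coe_nnreal,
    ← ENNReal.ofReal_add a.coe_nonneg (Real.sqrt_nonneg _)]
  refine ENNReal.ofReal_le_ofReal ?_
  have ha0 := a.coe_nonneg
  have ha1 := a'.coe_nonneg
  rcases le_total (q : ℝ) a with hqa | hqa
  · linarith [Real.sqrt_nonneg (s / 2)]
  have hkey : ((q : ℝ) - a) ^ 2 ≤ a * (1 - a) * (Real.exp s - 1) := by
    have hae : (a' : ℝ) = 1 - a := by linarith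
    have hqe : (q' : ℝ) = 1 - q := by linarith
    rw [hae, hqe] at h2'
    rw [hae] at ha1
    nlinarith [mul_le_mul_of_nonneg_left h1' ha1, mul_le_mul_of_nonneg_left h2' ha0,
      mul_le_mul_of_nonneg_left h3' (mul_nonneg ha0 ha1)]
  have h4 := two_mul_sq_sub_le hs ha0 (by linarith [q'.coe_nonneg]) hqa hkey
  have h5 : (q : ℝ) - a ≤ √(s / 2) := Real.le_sqrt_of_sq_le (by linarith)
  linarith

theorem pi_withDensity {ι : Type*} [Fintype ι] {Y : ι → Type*} [∀ i, MeasurableSpace (Y i)]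
    (μ : ∀ i, Measure (Y i)) [∀ i, IsProbabilityMeasure (μ i)] {D : ∀ i, Y i → ℝ≥0∞}
    (hD : ∀ i, Measurable (D i)) [∀ i, SigmaFinite ((μ i).withDensity (D i))] :
    Measure.pi (fun i => (μ i).withDensity (D i)) =
      (Measure.pi μ).withDensity fun x => ∏ i, D i (x i) := by
  refine Measure.pi_eq fun s hs => ?_
  rw [withDensity_apply _ (MeasurableSet.univ_pi hs),
    ← lintegral_indicator (MeasurableSet.univ_pi hs)]
  have h : ∀ x, (Set.univ.pi s).indicator (fun x => ∏ i, D i (x i)) x =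
      ∏ i, (s i).indicator (D i) (x i) := by
    intro x
    by_cases hx : x ∈ Set.univ.pi s
    · rw [Set.indicator_of_mem hx]
      exact Finset.prod_congr rfl fun i _ => (Set.indicator_of_mem (hx i trivial) _).symm
    · rw [Set.indicator_of_notMem hx]
      simp only [Set.mem_pi, Set.mem_univ, true_imp_iff, not_forall] at hx
      obtain ⟨i, hi⟩ := hx
      exact (Finset.prod_eq_zero (Finset.mem_univ i) (Set.indicator_of_notMem hi _)).symm
  simp_rw [h]
  rw [lintegral_pi_prod μ fun i => (hD i).indicator (hs i)]
  refine Finset.prod_congr rfl fun i _ => ?_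
  rw [lintegral_indicator (hs i), withDensity_apply _ (hs i)]

theorem measurable_measure_pi {α ι : Type*} [MeasurableSpace α] [Fintype ι] {Y : ι → Type*}
    [∀ i, MeasurableSpace (Y i)] {κ : ∀ i, α → Measure (Y i)}
    [∀ i a, IsProbabilityMeasure (κ i a)] (hκ : ∀ i, Measurable (κ i)) :
    Measurable fun a => Measure.pi fun i => κ i a := by
  refine Measurable.measure_of_isPiSystem_of_isProbabilityMeasure generateFrom_pi.symm
    isPiSystem_pi ?_
  rintro _ ⟨s, hs, rfl⟩
  simp_rw [Measure.pi_pi]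
  exact Finset.measurable_prod _ fun i _ =>
    (Measure.measurable_coe (hs i trivial)).comp (hκ i)

theorem pi_bind {ι : Type*} [Fintype ι] {Z Y : ι → Type*} [∀ i, MeasurableSpace (Z i)]
    [∀ i, MeasurableSpace (Y i)] (μ : ∀ i, Measure (Z i)) [∀ i, IsProbabilityMeasure (μ i)]
    {κ : ∀ i, Z i → Measure (Y i)} [∀ i z, IsProbabilityMeasure (κ i z)]
    (hκ : ∀ i, Measurable (κ i)) [∀ i, SigmaFinite ((μ i).bind (κ i))] :
    (Measure.pi μ).bind (fun z => Measure.pi fun i => κ i (z i)) =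
      Measure.pi fun i => (μ i).bind (κ i) := by
  refine (Measure.pi_eq fun s hs => ?_).symm
  have hm : Measurable fun z : ∀ i, Z i => Measure.pi fun i => κ i (z i) :=
    measurable_measure_pi (κ := fun i (z : ∀ i, Z i) => κ i (z i)) fun i =>
      (hκ i).comp (measurable_pi_apply i)
  rw [Measure.bind_apply (MeasurableSet.univ_pi hs) hm.aemeasurable]
  simp_rw [Measure.pi_pi]
  rw [lintegral_pi_prod μ (f := fun i z => κ i z (s i))
    fun i => (Measure.measurable_coe (hs i)).comp (hκ i)]
  exact Finset.prod_congr rfl fun i _ => (Measure.bind_apply (hs i) (hκ i).aemeasurable).symm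

/-- The law of the vector obtained from `y` by inserting a draw from `Q` at a uniformly random
position. -/
noncomputable def insertLaw {X : Type*} [MeasurableSpace X] {M : ℕ} (Q : Measure X)
    (y : Fin M → X) : Measure (Fin (M + 1) → X) :=
  ((M : ℝ≥0∞) + 1)⁻¹ • ∑ k : Fin (M + 1),
    Q.map fun z => (MeasurableEquiv.piFinSuccAbove (fun _ => X) k).symm (z, y)

theorem insertLaw_apply {X : Type*} [MeasurableSpace X] {M : ℕ} (Q : Measure X)
    (y : Fin M → X) {s : Set (Fin (M + 1) → X)} (hs : MeasurableSet s) :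
    insertLaw Q y s = ((M : ℝ≥0∞) + 1)⁻¹ * ∑ k : Fin (M + 1),
      Q {z | (MeasurableEquiv.piFinSuccAbove (fun _ => X) k).symm (z, y) ∈ s} := by
  simp only [insertLaw, Measure.smul_apply, Measure.coe_finsetSum, Finset.sum_apply, smul_eq_mul]
  congr 1
  refine Finset.sum_congr rfl fun k _ => ?_
  rw [Measure.map_apply (by fun_prop) hs]
  rfl

instance isProbabilityMeasure_insertLaw {X : Type*} [MeasurableSpace X] {M : ℕ} (Q : Measure X)
    [IsProbabilityMeasure Q] (y : Fin M → X) : IsProbabilityMeasure (insertLaw Q y) := by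
  refine ⟨?_⟩
  rw [insertLaw_apply Q y MeasurableSet.univ]
  simp only [Set.mem_univ, Set.ofPred_true, measure_univ, Finset.sum_const, Finset.card_univ,
    Fintype.card_fin, nsmul_eq_mul, mul_one]
  push_cast
  exact ENNReal.inv_mul_cancel (by simp) (by finiteness)

theorem measurable_insertLaw {A X : Type*} [MeasurableSpace A] [MeasurableSpace X] {M : ℕ}
    (κ : Kernel A X) [IsMarkovKernel κ] :
    Measurable fun p : A × (Fin M → X) => insertLaw (κ p.1) p.2 := by
  refine Measure.measurable_of_measurable_coe _ fun s hs => ?_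
  simp_rw [insertLaw_apply _ _ hs]
  refine Measurable.const_mul (Finset.measurable_sum _ fun k _ => ?_) _
  have hm : Measurable fun q : (A × (Fin M → X)) × X =>
      (MeasurableEquiv.piFinSuccAbove (fun _ => X) k).symm (q.2, q.1.2) := by fun_prop
  exact Kernel.measurable_kernel_prodMk_left (κ := κ.comap Prod.fst measurable_fst) (hm hs)

theorem measurable_insertLaw_left {X : Type*} [MeasurableSpace X] {M : ℕ} (Q : Measure X)
    [IsProbabilityMeasure Q] : Measurable fun y : Fin M → X => insertLaw Q y := by
  refine Measure.measurable_of_measurable_coe _ fun s hs => ?_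
  simp_rw [insertLaw_apply _ _ hs]
  refine Measurable.const_mul (Finset.measurable_sum _ fun k _ => ?_) _
  exact measurable_measure_prodMk_right
    ((MeasurableEquiv.piFinSuccAbove (fun _ => X) k).symm.measurable hs)

theorem bind_insertLaw {X : Type*} [MeasurableSpace X] {M : ℕ} (P : Measure X)
    [IsProbabilityMeasure P] {L : X → ℝ≥0∞} (hL : Measurable L)
    [IsProbabilityMeasure (P.withDensity L)] :
    (Measure.pi fun _ : Fin M => P).bind (insertLaw (P.withDensity L)) =
      (Measure.pi fun _ : Fin (M + 1) => P).withDensity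
        fun w => ((M : ℝ≥0∞) + 1)⁻¹ * ∑ k, L (w k) := by
  set Q := P.withDensity L with hQ
  have hmeas : Measurable (insertLaw Q : (Fin M → X) → _) :=
    measurable_insertLaw_left Q
  ext s hs
  rw [Measure.bind_apply hs hmeas.aemeasurable, withDensity_apply _ hs]
  simp_rw [insertLaw_apply Q _ hs]
  have hk : ∀ k : Fin (M + 1), Measurable fun y : Fin M → X =>
      Q {z | (MeasurableEquiv.piFinSuccAbove (fun _ => X) k).symm (z, y) ∈ s} := fun k =>
    measurable_measure_prodMk_right
      ((MeasurableEquiv.piFinSuccAbove (fun _ => X) k).symm.measurable hs)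
  have hLk : ∀ k : Fin (M + 1), Measurable fun w : Fin (M + 1) → X => L (w k) := fun k => by
    fun_prop
  rw [lintegral_const_mul _ (Finset.measurable_sum _ fun k _ => hk k),
    lintegral_const_mul _ (Finset.measurable_sum _ fun k _ => hLk k),
    lintegral_finsetSum _ fun k _ => hk k, lintegral_finsetSum _ fun k _ => hLk k]
  congr 1
  refine Finset.sum_congr rfl fun k _ => ?_
  have hmp := (measurePreserving_piFinSuccAbove (fun _ : Fin (M + 1) => P) k).symm
  have hs' := hmp.measurable hs
  calc ∫⁻ y, Q {z | (MeasurableEquiv.piFinSuccAbove (fun _ => X) k).symm (z, y) ∈ s}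
        ∂(Measure.pi fun _ : Fin M => P)
      = (Q.prod (Measure.pi fun _ : Fin M => P))
          ((MeasurableEquiv.piFinSuccAbove (fun _ => X) k).symm ⁻¹' s) :=
        (Measure.prod_apply_symm hs').symm
    _ = ∫⁻ x in (MeasurableEquiv.piFinSuccAbove (fun _ => X) k).symm ⁻¹' s,
          L x.1 ∂(P.prod (Measure.pi fun _ : Fin M => P)) := by
        rw [hQ, prod_withDensity_left hL, withDensity_apply _ hs']
    _ = _ := by
        rw [← hmp.setLIntegral_comp_preimage hs (hLk k)]
        simp [Fin.insertNthEquiv]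

theorem lintegral_average_eq_one {X : Type*} [MeasurableSpace X] {M : ℕ} (P : Measure X)
    [IsProbabilityMeasure P] {L : X → ℝ≥0∞} (hL : Measurable L) (hL1 : ∫⁻ x, L x ∂P = 1) :
    ∫⁻ w, ((M : ℝ≥0∞) + 1)⁻¹ * ∑ k, L (w k) ∂(Measure.pi fun _ : Fin (M + 1) => P) = 1 := by
  have hLk : ∀ k : Fin (M + 1), Measurable fun w : Fin (M + 1) → X => L (w k) := fun k => by
    fun_prop
  rw [lintegral_const_mul _ (Finset.measurable_sum _ fun k _ => hLk k),
    lintegral_finsetSum _ fun k _ => hLk k]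
  have : ∀ k : Fin (M + 1), ∫⁻ w, L (w k) ∂(Measure.pi fun _ : Fin (M + 1) => P) = 1 := fun k => by
    rw [← hL1]
    exact (measurePreserving_eval (fun _ : Fin (M + 1) => P) k).lintegral_comp hL
  simp only [this, Finset.sum_const, Finset.card_univ, Fintype.card_fin, nsmul_eq_mul, mul_one]
  push_cast
  exact ENNReal.inv_mul_cancel (by simp) (by finiteness)

theorem lintegral_average_sq {X : Type*} [MeasurableSpace X] {M : ℕ} (P : Measure X)
    [IsProbabilityMeasure P] {L : X → ℝ≥0∞} (hL : Measurable L) (hL1 : ∫⁻ x, L x ∂P = 1)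
    {χ : ℝ≥0∞} (hL2 : ∫⁻ x, L x ^ 2 ∂P = 1 + χ) :
    ∫⁻ w, (((M : ℝ≥0∞) + 1)⁻¹ * ∑ k, L (w k)) ^ 2 ∂(Measure.pi fun _ : Fin (M + 1) => P) =
      1 + ((M : ℝ≥0∞) + 1)⁻¹ * χ := by
  have hpair : ∀ k l : Fin (M + 1),
      ∫⁻ w, L (w k) * L (w l) ∂(Measure.pi fun _ : Fin (M + 1) => P) =
        1 + if k = l then χ else 0 := by
    intro k l
    split_ifs with h
    · subst h
      rw [← hL2, ← (measurePreserving_eval (fun _ : Fin (M + 1) => P) k).lintegral_comp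
        (hL.pow_const 2)]
      simp [sq]
    · have hi : iIndepFun (fun i (x : Fin (M + 1) → X) => L (x i)) (Measure.pi fun _ => P) :=
        iIndepFun_pi fun i => hL.aemeasurable
      have hm : ∀ k : Fin (M + 1), Measurable fun w : Fin (M + 1) → X => L (w k) := fun k =>
        hL.comp (measurable_pi_apply k)
      rw [lintegral_mul_eq_lintegral_mul_lintegral_of_indepFun'' (hm k).aemeasurable
        (hm l).aemeasurable
        (hi.indepFun h)]
      have : ∀ k : Fin (M + 1),
          ∫⁻ w, L (w k) ∂(Measure.pi fun _ : Fin (M + 1) => P) = 1 := fun k => by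
        rw [← hL1]
        exact (measurePreserving_eval (fun _ : Fin (M + 1) => P) k).lintegral_comp hL
      simp [this]
  have hm : ∀ k l : Fin (M + 1), Measurable fun w : Fin (M + 1) → X => L (w k) * L (w l) :=
    fun k l => by fun_prop
  simp_rw [mul_pow, sq (∑ k, L _), Finset.sum_mul_sum]
  rw [lintegral_const_mul _ (Finset.measurable_sum _ fun k _ => Finset.measurable_sum _
    fun l _ => hm k l), lintegral_finsetSum _ fun k _ => Finset.measurable_sum _ fun l _ => hm k l]
  simp_rw [lintegral_finsetSum _ fun l _ => hm _ l, hpair]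
  simp only [Finset.sum_add_distrib, Finset.sum_const, Finset.card_univ, Fintype.card_fin,
    nsmul_eq_mul, mul_one, Finset.sum_ite_eq, Finset.mem_univ, if_true]
  push_cast
  have h1 : ((M : ℝ≥0∞) + 1)⁻¹ * ((M : ℝ≥0∞) + 1) = 1 :=
    ENNReal.inv_mul_cancel (by simp) (by finiteness)
  generalize ((M : ℝ≥0∞) + 1) = N at *
  calc N⁻¹ ^ 2 * (N * N + N * χ) = (N⁻¹ * N) * ((N⁻¹ * N) + N⁻¹ * χ) := by ring
    _ = _ := by rw [h1, one_mul]

theorem lintegral_rnDeriv_sq {X : Type*} [MeasurableSpace X] (Q P : Measure X)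
    [IsProbabilityMeasure Q] [IsProbabilityMeasure P] (h : Q ≪ P) :
    ∫⁻ x, Q.rnDeriv P x ^ 2 ∂P =
      1 + ∫⁻ x, ENNReal.ofReal (((Q.rnDeriv P x).toReal - 1) ^ 2) ∂P := by
  have hL := Q.measurable_rnDeriv P
  have h1 : ∫⁻ x, Q.rnDeriv P x ∂P = 1 := by rw [Measure.lintegral_rnDeriv h, measure_univ]
  have h2 : ∫⁻ x, (Q.rnDeriv P x ^ 2 + 1) ∂P =
      ∫⁻ x, (ENNReal.ofReal (((Q.rnDeriv P x).toReal - 1) ^ 2) + 2 * Q.rnDeriv P x) ∂P := by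
    refine lintegral_congr_ae ?_
    filter_upwards [Q.rnDeriv_lt_top P] with x hx
    generalize Q.rnDeriv P x = y at *
    lift y to ℝ≥0 using hx.ne
    have e : ((y : ℝ≥0∞)) = ENNReal.ofReal (y : ℝ) := by simp
    rw [ENNReal.coe_toReal, e, ← ENNReal.ofReal_pow y.coe_nonneg, ← ENNReal.ofReal_one,
      ← ENNReal.ofReal_add (by positivity) (by positivity),
      ← ENNReal.ofReal_ofNat, ← ENNReal.ofReal_mul (by positivity),
      ← ENNReal.ofReal_add (by positivity) (by positivity)]
    congr 1
    ring
  rw [lintegral_add_right _ measurable_const, lintegral_add_right _ (by fun_prop),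
    lintegral_const_mul _ hL, h1, lintegral_one, measure_univ] at h2
  refine (ENNReal.add_left_inj ENNReal.one_ne_top).1 (h2.trans ?_)
  rw [mul_one, ← one_add_one_eq_two]
  ring
theorem lintegral_pi_insertLaw_le {ι : Type*} [Fintype ι] {X : ι → Type*}
    [∀ j, MeasurableSpace (X j)] (P Q : ∀ j, Measure (X j)) [∀ j, IsProbabilityMeasure (P j)]
    [∀ j, IsProbabilityMeasure (Q j)] {M n : ℕ} (hn : n ≤ 2 * M)
    {f : (∀ j, Fin (M + 1) → X j) → ℝ≥0∞} (hf : Measurable f) (hf1 : ∀ x, f x ≤ 1) :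
    ∫⁻ y, ∫⁻ w, f w ∂(Measure.pi fun j => insertLaw (Q j) (y j))
        ∂(Measure.pi fun j => Measure.pi fun _ : Fin M => P j) ≤
      ∫⁻ w, f w ∂(Measure.pi fun j => Measure.pi fun _ : Fin (M + 1) => P j) +
        ((∑ j, chiSqDiv (Q j) (P j)) / n) ^ ((1 : ℝ) / 2) := by
  rcases eq_or_ne (∑ j, chiSqDiv (Q j) (P j)) ⊤ with htop | htop
  · rw [htop, ENNReal.top_div_of_ne_top (ENNReal.natCast_ne_top n),
      ENNReal.top_rpow_of_pos (by norm_num), add_top]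
    exact le_top
  have hfin : ∀ j, chiSqDiv (Q j) (P j) ≠ ⊤ := by simpa using htop
  have hac : ∀ j, Q j ≪ P j := fun j => by
    by_contra hj
    exact hfin j (if_neg hj)
  set L : ∀ j, X j → ℝ≥0∞ := fun j => (Q j).rnDeriv (P j) with hLdef
  have hL : ∀ j, Measurable (L j) := fun j => (Q j).measurable_rnDeriv (P j)
  have hQ : ∀ j, (P j).withDensity (L j) = Q j := fun j =>
    Measure.withDensity_rnDeriv_eq _ _ (hac j)
  have hL1 : ∀ j, ∫⁻ x, L j x ∂(P j) = 1 := fun j => by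
    rw [Measure.lintegral_rnDeriv (hac j), measure_univ]
  have hL2 : ∀ j, ∫⁻ x, L j x ^ 2 ∂(P j) = 1 + chiSqDiv (Q j) (P j) := fun j => by
    rw [lintegral_rnDeriv_sq _ _ (hac j), chiSqDiv, if_pos (hac j)]
  set D : ∀ j, (Fin (M + 1) → X j) → ℝ≥0∞ :=
    fun j w => ((M : ℝ≥0∞) + 1)⁻¹ * ∑ k, L j (w k) with hD
  have hDm : ∀ j, Measurable (D j) := fun j => by
    have := hL j
    fun_prop
  have hlaw : ∀ j, (Measure.pi fun _ : Fin M => P j).bind (insertLaw (Q j)) =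
      (Measure.pi fun _ : Fin (M + 1) => P j).withDensity (D j) := fun j => by
    have : IsProbabilityMeasure ((P j).withDensity (L j)) := by rw [hQ]; infer_instance
    have h := bind_insertLaw (M := M) (P j) (hL j)
    rwa [hQ] at h
  have hprob : ∀ j, IsProbabilityMeasure
      ((Measure.pi fun _ : Fin (M + 1) => P j).withDensity (D j)) := fun j =>
    ⟨by rw [withDensity_apply _ MeasurableSet.univ, Measure.restrict_univ,
      lintegral_average_eq_one (P j) (hL j) (hL1 j)]⟩
  have hprob' : ∀ j, IsProbabilityMeasure
      ((Measure.pi fun _ : Fin M => P j).bind (insertLaw (Q j))) := fun j => by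
    rw [hlaw]; infer_instance
  have hins : ∀ j, Measurable (insertLaw (Q j) : (Fin M → X j) → _) :=
    fun j => measurable_insertLaw_left (Q j)
  have hprodm : Measurable fun w : ∀ j, Fin (M + 1) → X j => ∏ j, D j (w j) := by fun_prop
  have hlhs : ∫⁻ y, ∫⁻ w, f w ∂(Measure.pi fun j => insertLaw (Q j) (y j))
        ∂(Measure.pi fun j => Measure.pi fun _ : Fin M => P j) =
      ∫⁻ w, f w * ∏ j, D j (w j)
        ∂(Measure.pi fun j => Measure.pi fun _ : Fin (M + 1) => P j) := by
    rw [← Measure.lintegral_bind (m := Measure.pi fun j => Measure.pi fun _ : Fin M => P j)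
      (μ := fun y => Measure.pi fun j => insertLaw (Q j) (y j))
      (measurable_measure_pi (κ := fun j (y : ∀ j, Fin M → X j) => insertLaw (Q j) (y j))
        fun j => (hins j).comp (measurable_pi_apply j)).aemeasurable hf.aemeasurable,
      pi_bind (fun j => Measure.pi fun _ : Fin M => P j) hins]
    simp_rw [hlaw]
    rw [pi_withDensity _ hDm, lintegral_withDensity_eq_lintegral_mul _ hprodm hf]
    simp_rw [Pi.mul_apply, mul_comm]
  set s : ℝ := ∑ j, (((M : ℝ≥0∞) + 1)⁻¹ * chiSqDiv (Q j) (P j)).toReal with hs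
  have hs0 : 0 ≤ s := Finset.sum_nonneg fun j _ => ENNReal.toReal_nonneg
  have hfin' : ∀ j, ((M : ℝ≥0∞) + 1)⁻¹ * chiSqDiv (Q j) (P j) ≠ ⊤ := fun j =>
    ENNReal.mul_ne_top (by simp) (hfin j)
  have hD1 : ∫⁻ w, ∏ j, D j (w j)
      ∂(Measure.pi fun j => Measure.pi fun _ : Fin (M + 1) => P j) = 1 := by
    rw [lintegral_pi_prod _ hDm]
    exact Finset.prod_eq_one fun j _ => lintegral_average_eq_one (P j) (hL j) (hL1 j)
  have hD2 : ∫⁻ w, (∏ j, D j (w j)) ^ 2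
      ∂(Measure.pi fun j => Measure.pi fun _ : Fin (M + 1) => P j) ≤
        ENNReal.ofReal (Real.exp s) := by
    simp_rw [← Finset.prod_pow]
    rw [lintegral_pi_prod (fun j => Measure.pi fun _ : Fin (M + 1) => P j)
      (f := fun j w => D j w ^ 2) fun j => (hDm j).pow_const 2, hs, Real.exp_sum,
      ENNReal.ofReal_prod_of_nonneg fun j _ => (Real.exp_pos _).le]
    refine Finset.prod_le_prod' fun j _ => ?_
    rw [hD, lintegral_average_sq (P j) (hL j) (hL1 j) (hL2 j), ← ENNReal.ofReal_toReal (hfin' j),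
      ← ENNReal.ofReal_one, ← ENNReal.ofReal_add zero_le_one ENNReal.toReal_nonneg,
      ENNReal.toReal_ofReal ENNReal.toReal_nonneg]
    refine ENNReal.ofReal_le_ofReal ?_
    rw [add_comm]
    exact Real.add_one_le_exp _
  rw [hlhs]
  refine (lintegral_mul_le_lintegral_add_of_lintegral_sq_le _ hprodm hf hf1 hD1 hs0 hD2).trans ?_
  gcongr
  rw [Real.sqrt_eq_rpow, ← ENNReal.ofReal_rpow_of_nonneg (by positivity) (by norm_num)]
  gcongr
  rw [ENNReal.ofReal_div_of_pos two_pos, hs, ENNReal.ofReal_sum_of_nonneg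
    fun j _ => ENNReal.toReal_nonneg]
  simp_rw [ENNReal.ofReal_toReal (hfin' _)]
  rw [← Finset.mul_sum, div_eq_mul_inv, div_eq_mul_inv, mul_comm _ (∑ j, _), mul_assoc,
    ENNReal.ofReal_ofNat, ← ENNReal.mul_inv (by simp) (by simp)]
  gcongr
  rw [add_mul, one_mul, mul_comm]
  exact (by exact_mod_cast hn : (n : ℝ≥0∞) ≤ 2 * M).trans le_self_add

theorem exists_kernel_lintegral_le {ι : Type*} [Fintype ι] {A X : ι → Type*}
    [∀ j, MeasurableSpace (A j)] [∀ j, MeasurableSpace (X j)] (κ : ∀ j, Kernel (A j) (X j))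
    [∀ j, IsMarkovKernel (κ j)] {h : ℕ} (m : ℕ) :
    ∃ C : Kernel ((∀ j, A j) × (∀ j, Fin h → X j)) (∀ j, Fin (h + m) → X j), IsMarkovKernel C ∧
      ∀ (P : ∀ j, Measure (X j)) (_ : ∀ j, IsProbabilityMeasure (P j)) (a : ∀ j, A j)
        (f : (∀ j, Fin (h + m) → X j) → ℝ≥0∞), Measurable f → (∀ x, f x ≤ 1) →
        ∫⁻ y, ∫⁻ w, f w ∂(C (a, y)) ∂(Measure.pi fun j => Measure.pi fun _ : Fin h => P j) ≤
          ∫⁻ w, f w ∂(Measure.pi fun j => Measure.pi fun _ : Fin (h + m) => P j) +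
            m * ((∑ j, chiSqDiv (κ j (a j)) (P j)) / (h + h : ℕ)) ^ ((1 : ℝ) / 2) := by
  induction m with
  | zero =>
    refine ⟨Kernel.deterministic Prod.snd measurable_snd, inferInstance, ?_⟩
    intro P _ a f hf _
    refine (lintegral_congr fun y => ?_).le.trans le_self_add
    exact Kernel.lintegral_deterministic' (g := Prod.snd) (a := (a, y)) measurable_snd hf
  | succ m ih =>
    obtain ⟨C, hC, ih⟩ := ih
    let S : Kernel (((∀ j, A j) × (∀ j, Fin h → X j)) × (∀ j, Fin (h + m) → X j))
        (∀ j, Fin (h + m + 1) → X j) :=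
      ⟨fun p => Measure.pi fun j => insertLaw (κ j (p.1.1 j)) (p.2 j),
        measurable_measure_pi
          (κ := fun j (p : ((∀ j, A j) × (∀ j, Fin h → X j)) × (∀ j, Fin (h + m) → X j)) =>
            insertLaw (κ j (p.1.1 j)) (p.2 j))
          fun j => (measurable_insertLaw (κ j)).comp
            (f := fun p : ((∀ j, A j) × (∀ j, Fin h → X j)) × (∀ j, Fin (h + m) → X j) =>
              (p.1.1 j, p.2 j)) (by fun_prop)⟩
    have hS : ∀ p, S p = Measure.pi fun j => insertLaw (κ j (p.1.1 j)) (p.2 j) := fun _ => rfl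
    have : IsMarkovKernel S := ⟨fun p => by rw [hS]; infer_instance⟩
    refine ⟨Kernel.snd (C ⊗ₖ S), inferInstance, ?_⟩
    intro P hP a f hf hf1
    have hf' : Measurable fun p : (∀ j, Fin (h + m) → X j) × (∀ j, Fin (h + m + 1) → X j) =>
        f p.2 := hf.comp measurable_snd
    have hg : Measurable fun w : ∀ j, Fin (h + m) → X j =>
        ∫⁻ w', f w' ∂(Measure.pi fun j => insertLaw (κ j (a j)) (w j)) :=
      (Measure.measurable_lintegral hf).comp (measurable_measure_pi
        (κ := fun j (w : ∀ j, Fin (h + m) → X j) => insertLaw (κ j (a j)) (w j))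
        fun j => (measurable_insertLaw_left (κ j (a j))).comp (measurable_pi_apply j))
    have hg1 : ∀ w : ∀ j, Fin (h + m) → X j,
        ∫⁻ w', f w' ∂(Measure.pi fun j => insertLaw (κ j (a j)) (w j)) ≤ 1 := fun w =>
      (lintegral_mono hf1).trans (by simp)
    have hcomp : ∀ y, ∫⁻ w, f w ∂(Kernel.snd (C ⊗ₖ S) (a, y)) =
        ∫⁻ w, ∫⁻ w', f w' ∂(Measure.pi fun j => insertLaw (κ j (a j)) (w j)) ∂(C (a, y)) := by
      intro y
      refine (Kernel.lintegral_snd (C ⊗ₖ S) (a, y) hf).trans ?_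
      exact Kernel.lintegral_compProd _ _ _ hf'
    refine (lintegral_congr hcomp).le.trans ((ih P hP a _ hg hg1).trans ?_)
    push_cast
    rw [add_mul, one_mul, add_comm ((m : ℝ≥0∞) * _), ← add_assoc]
    gcongr
    simpa only [Nat.cast_add] using! lintegral_pi_insertLaw_le P (fun j => κ j (a j)) (M := h + m)
      (n := h + h) (by omega) hf hf1

/-- Regrouping two coordinatewise families of observations into one family of vectors. -/
def regroup {ι α β γ : Type*} {X : ι → Type*} (σ : α ⊕ β ≃ γ)
    (p : (∀ j, α → X j) × (∀ j, β → X j)) (i : γ) (j : ι) : X j :=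
  Sum.elim (p.1 j) (p.2 j) (σ.symm i)

theorem measurable_regroup {ι α β γ : Type*} {X : ι → Type*} [∀ j, MeasurableSpace (X j)]
    (σ : α ⊕ β ≃ γ) : Measurable (regroup (X := X) σ) := by
  refine measurable_pi_iff.2 fun i => measurable_pi_iff.2 fun j => ?_
  unfold regroup
  rcases σ.symm i with k | k <;> simp only [Sum.elim_inl, Sum.elim_inr] <;> fun_prop

theorem map_regroup {ι α β γ : Type*} [Fintype ι] [Fintype α] [Fintype β] [Fintype γ]
    {X : ι → Type*} [∀ j, MeasurableSpace (X j)] (σ : α ⊕ β ≃ γ) (P : ∀ j, Measure (X j))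
    [∀ j, IsProbabilityMeasure (P j)] :
    ((Measure.pi fun j => Measure.pi fun _ : α => P j).prod
      (Measure.pi fun j => Measure.pi fun _ : β => P j)).map (regroup σ) =
      Measure.pi fun _ : γ => Measure.pi P := by
  refine (Measure.pi_eq_generateFrom (fun _ => generateFrom_pi) (fun _ => isPiSystem_pi)
    (fun _ => ⟨fun _ => Set.univ, fun _ => ⟨fun _ => Set.univ, by simp, by simp⟩,
      fun _ => by simp, by simp [Set.iUnion_const]⟩) ?_).symm
  intro s hs
  choose t ht hts using hs
  obtain rfl : s = fun i => Set.univ.pi (t i) := funext fun i => (hts i).symm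
  have htm : ∀ i j, MeasurableSet (t i j) := fun i j => ht i j trivial
  have hm : MeasurableSet (Set.univ.pi fun i => Set.univ.pi (t i)) :=
    MeasurableSet.univ_pi fun i => MeasurableSet.univ_pi (htm i)
  rw [Measure.map_apply (measurable_regroup σ) hm]
  have hpre : regroup σ ⁻¹' (Set.univ.pi fun i => Set.univ.pi (t i)) =
      (Set.univ.pi fun j => Set.univ.pi fun k => t (σ (Sum.inl k)) j) ×ˢ
        (Set.univ.pi fun j => Set.univ.pi fun k => t (σ (Sum.inr k)) j) := by
    ext p
    simp only [Set.mem_preimage, Set.mem_pi, Set.mem_univ, true_imp_iff, Set.mem_prod, regroup]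
    rw [← σ.forall_congr_right]
    simp only [Equiv.symm_apply_apply, Sum.forall, Sum.elim_inl, Sum.elim_inr]
    exact and_congr forall_comm forall_comm
  rw [hpre, Measure.prod_prod]
  simp only [Measure.pi_pi]
  rw [← σ.prod_comp, Fintype.prod_sum_type, Finset.prod_comm,
    Finset.prod_comm (s := (Finset.univ : Finset ι)) (t := (Finset.univ : Finset β))]

/-- Splitting a family of vectors into two coordinatewise families of observations. -/
def ungroup {ι α β γ : Type*} {X : ι → Type*} (σ : α ⊕ β ≃ γ) (x : γ → ∀ j, X j) :
    (∀ j, α → X j) × (∀ j, β → X j) :=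
  (fun j k => x (σ (Sum.inl k)) j, fun j k => x (σ (Sum.inr k)) j)

theorem measurable_ungroup {ι α β γ : Type*} {X : ι → Type*} [∀ j, MeasurableSpace (X j)]
    (σ : α ⊕ β ≃ γ) : Measurable (ungroup (X := X) σ) := by
  unfold ungroup
  fun_prop

theorem map_ungroup {ι α β γ : Type*} [Fintype ι] [Fintype α] [Fintype β] [Fintype γ]
    {X : ι → Type*} [∀ j, MeasurableSpace (X j)] (σ : α ⊕ β ≃ γ) (P : ∀ j, Measure (X j))
    [∀ j, IsProbabilityMeasure (P j)] :
    (Measure.pi fun _ : γ => Measure.pi P).map (ungroup σ) =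
      (Measure.pi fun j => Measure.pi fun _ : α => P j).prod
        (Measure.pi fun j => Measure.pi fun _ : β => P j) := by
  rw [← map_regroup σ P, Measure.map_map (measurable_ungroup σ) (measurable_regroup σ)]
  have : ungroup (X := X) σ ∘ regroup σ = id := by
    funext p
    simp [ungroup, regroup]
  rw [this, Measure.map_id]

theorem tvDist_nonneg {X : Type*} [MeasurableSpace X] (μ ν : Measure X) : 0 ≤ tvDist μ ν :=
  Real.iSup_nonneg fun _ => abs_nonneg _

theorem tvDist_le_toReal {X : Type*} [MeasurableSpace X] (μ ν : Measure X)
    [IsProbabilityMeasure μ] [IsProbabilityMeasure ν] {B : ℝ≥0∞} (hB : B ≠ ⊤)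
    (h : ∀ f : X → ℝ≥0∞, Measurable f → (∀ x, f x ≤ 1) →
      ∫⁻ x, f x ∂ν ≤ ∫⁻ x, f x ∂μ + B) : tvDist μ ν ≤ B.toReal := by
  have hset : ∀ s : Set X, MeasurableSet s → ν.real s ≤ μ.real s + B.toReal := by
    intro s hs
    have h1 := h (s.indicator 1) (measurable_one.indicator hs)
      fun x => Set.indicator_le_self' (by simp) x
    rw [lintegral_indicator_one hs, lintegral_indicator_one hs] at h1
    rw [Measure.real, Measure.real, ← ENNReal.toReal_add (measure_ne_top _ _) hB]
    exact ENNReal.toReal_mono (by finiteness) h1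
  refine Real.iSup_le (fun ⟨s, hs⟩ => ?_) ENNReal.toReal_nonneg
  have h1 := hset s hs
  have h2 := hset sᶜ hs.compl
  rw [probReal_compl_eq_one_sub hs, probReal_compl_eq_one_sub hs] at h2
  change |μ.real s - ν.real s| ≤ _
  rw [abs_le]
  constructor <;> linarith

theorem ofReal_ampErr_le {X Θ : Type*} [MeasurableSpace X] {P : Θ → Measure X} {n m : ℕ}
    (hP : ∀ θ, IsProbabilityMeasure (P θ)) (T : Kernel (Fin n → X) (Fin (n + m) → X))
    [IsMarkovKernel T] {B : ℝ≥0∞}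
    (hT : ∀ θ (f : (Fin (n + m) → X) → ℝ≥0∞), Measurable f → (∀ x, f x ≤ 1) →
      ∫⁻ x, ∫⁻ w, f w ∂(T x) ∂(Measure.pi fun _ : Fin n => P θ) ≤
        ∫⁻ w, f w ∂(Measure.pi fun _ : Fin (n + m) => P θ) + B) :
    ENNReal.ofReal (ampErr P n m) ≤ B := by
  rcases eq_or_ne B ⊤ with rfl | hB
  · exact le_top
  refine ENNReal.ofReal_le_of_le_toReal ?_
  refine (ciInf_le ⟨0, ?_⟩ (⟨T, inferInstance⟩ : {T : Kernel _ _ // IsMarkovKernel T})).trans ?_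
  · rintro _ ⟨S, rfl⟩
    exact Real.iSup_nonneg fun θ => tvDist_nonneg _ _
  refine Real.iSup_le (fun θ => ?_) ENNReal.toReal_nonneg
  refine tvDist_le_toReal _ _ hB fun f hf hf1 => ?_
  rw [Measure.lintegral_bind T.measurable.aemeasurable hf.aemeasurable]
  exact hT θ f hf hf1

theorem ofReal_ampErr_pi_le {ι : Type*} [Fintype ι] {X Θ : ι → Type*}
    [∀ j, MeasurableSpace (X j)] (p : ∀ j, Θ j → Measure (X j))
    (hp : ∀ j t, IsProbabilityMeasure (p j t)) {h : ℕ} (hh : h ≠ 0) (m : ℕ)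
    (κ : ∀ j, Kernel (Fin h → X j) (X j)) [∀ j, IsMarkovKernel (κ j)] :
    ENNReal.ofReal (ampErr (fun θ : ∀ j, Θ j => Measure.pi fun j => p j (θ j)) (h + h) m) ≤
      ((m : ℝ≥0∞) ^ 2 / (h + h : ℕ) * ∑ j, ⨆ t, ∫⁻ x, chiSqDiv (κ j x) (p j t)
        ∂(Measure.pi fun _ : Fin h => p j t)) ^ ((1 : ℝ) / 2) := by
  obtain ⟨C, hC, hCle⟩ := exists_kernel_lintegral_le κ (h := h) m
  let σ : Fin h ⊕ Fin h ≃ Fin (h + h) := finSumFinEquiv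
  let τ : Fin h ⊕ Fin (h + m) ≃ Fin (h + h + m) :=
    finSumFinEquiv.trans (finCongr (add_assoc h h m).symm)
  let D : Kernel ((∀ j, Fin h → X j) × (∀ j, Fin h → X j)) (∀ j, Fin h → X j) :=
    Kernel.deterministic Prod.fst measurable_fst
  let T : Kernel (Fin (h + h) → ∀ j, X j) (Fin (h + h + m) → ∀ j, X j) :=
    ((D ×ₖ C).map (regroup τ)).comap (ungroup σ) (measurable_ungroup σ)
  have hmap : IsMarkovKernel ((D ×ₖ C).map (regroup τ)) :=
    Kernel.IsMarkovKernel.map _ (measurable_regroup τ)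
  have hTm : IsMarkovKernel T := inferInstanceAs (IsMarkovKernel (Kernel.comap _ _ _))
  refine ofReal_ampErr_le (fun θ => inferInstance) T fun θ f hf hf1 => ?_
  set μ : ∀ k : ℕ, Measure (∀ j, Fin k → X j) :=
    fun k => Measure.pi fun j => Measure.pi fun _ : Fin k => p j (θ j) with hμ
  have hfτ : Measurable fun q => f (regroup (X := X) τ q) := hf.comp (measurable_regroup τ)
  set G : (∀ j, Fin h → X j) → ℝ≥0∞ :=
    fun a => ∫⁻ y, ∫⁻ w, f (regroup τ (a, w)) ∂(C (a, y)) ∂(μ h) with hG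
  set H : (∀ j, Fin h → X j) → ℝ≥0∞ := fun a => ∫⁻ w, f (regroup τ (a, w)) ∂(μ (h + m))
  have hTf : ∀ q, ∫⁻ w, f w ∂((D ×ₖ C).map (regroup τ) q) =
      ∫⁻ w, f (regroup τ (q.1, w)) ∂(C q) := fun q => by
    rw [Kernel.lintegral_map _ (measurable_regroup τ) _ hf, Kernel.lintegral_prod _ _ _ hfτ]
    exact Kernel.lintegral_deterministic' (g := Prod.fst) (a := q) measurable_fst
      (hfτ.lintegral_prod_right')
  have hFm : Measurable fun q => ∫⁻ w, f w ∂((D ×ₖ C).map (regroup τ) q) :=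
    (Measure.measurable_lintegral hf).comp (Kernel.measurable _)
  have hlhs : ∫⁻ x, ∫⁻ w, f w ∂(T x) ∂(Measure.pi fun _ : Fin (h + h) => Measure.pi fun j =>
      p j (θ j)) = ∫⁻ a, G a ∂(μ h) := by
    change ∫⁻ x, (fun q => ∫⁻ w, f w ∂((D ×ₖ C).map (regroup τ) q)) (ungroup σ x) ∂_ = _
    rw [← lintegral_map hFm (measurable_ungroup σ), map_ungroup σ fun j => p j (θ j),
      lintegral_prod _ hFm.aemeasurable]
    simp_rw [hTf, hG, hμ]
  have hrhs : ∫⁻ w, f w ∂(Measure.pi fun _ : Fin (h + h + m) => Measure.pi fun j =>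
      p j (θ j)) = ∫⁻ a, H a ∂(μ h) := by
    rw [← map_regroup τ fun j => p j (θ j), lintegral_map hf (measurable_regroup τ),
      lintegral_prod _ hfτ.aemeasurable]
  have hGm : Measurable G := by
    have := hFm.lintegral_prod_right' (ν := μ h)
    simpa only [hTf] using this
  have hHm : Measurable H := hfτ.lintegral_prod_right'
  have hGH : ∀ a, G a - H a ≤
      m * ((∑ j, chiSqDiv (κ j (a j)) (p j (θ j))) / (h + h : ℕ)) ^ ((1 : ℝ) / 2) := fun a =>
    tsub_le_iff_left.2 (hCle (fun j => p j (θ j)) (fun j => hp j _) a _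
      (hfτ.comp measurable_prodMk_left) fun w => hf1 _)
  have hsq : ∀ a, (G a - H a) ^ 2 ≤
      ∑ j, (m : ℝ≥0∞) ^ 2 / (h + h : ℕ) * chiSqDiv (κ j (a j)) (p j (θ j)) := fun a => by
    refine (pow_le_pow_left' (hGH a) 2).trans_eq ?_
    rw [mul_pow, ← ENNReal.rpow_natCast (_ ^ _), ← ENNReal.rpow_mul, ← Finset.mul_sum]
    norm_num
    rw [div_eq_mul_inv, div_eq_mul_inv]
    ring
  rw [hlhs, hrhs]
  calc ∫⁻ a, G a ∂(μ h) ≤ ∫⁻ a, H a + (G a - H a) ∂(μ h) :=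
        lintegral_mono fun a => le_add_tsub
    _ = ∫⁻ a, H a ∂(μ h) + ∫⁻ a, G a - H a ∂(μ h) := lintegral_add_left hHm _
    _ ≤ _ := ?_
  gcongr
  rw [one_div, ENNReal.le_rpow_inv_iff two_pos, ENNReal.rpow_ofNat]
  refine (sq_lintegral_le _ (hGm.sub hHm).aemeasurable).trans ?_
  rw [measure_univ, one_mul]
  refine (lintegral_pi_le_sum_of_le_sum _ (f := fun j a => (m : ℝ≥0∞) ^ 2 / (h + h : ℕ) *
    chiSqDiv (κ j a) (p j (θ j))) ((hGm.sub hHm).pow_const 2) hsq).trans ?_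
  have hc : (m : ℝ≥0∞) ^ 2 / (h + h : ℕ) ≠ ⊤ :=
    ENNReal.div_ne_top (by finiteness) (by exact_mod_cast (by omega : h + h ≠ 0))
  rw [Finset.mul_sum]
  refine Finset.sum_le_sum fun j _ => ?_
  rw [lintegral_const_mul' _ _ hc]
  gcongr
  exact le_iSup (fun t => ∫⁻ x, chiSqDiv (κ j x) (p j t)
    ∂(Measure.pi fun _ : Fin h => p j t)) (θ j)

theorem exists_forall_kernel_le_chiSqRisk_add {X Θ : Type*} [MeasurableSpace X]
    (P : Θ → Measure X) {n : ℕ} (hn : n ≠ 0) {ε : ℝ≥0∞} (hε : ε ≠ 0) :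
    ∃ κ : Kernel (Fin n → X) X, IsMarkovKernel κ ∧
      ⨆ θ, ∫⁻ x, chiSqDiv (κ x) (P θ) ∂(Measure.pi fun _ : Fin n => P θ) ≤ chiSqRisk P n + ε := by
  rcases eq_or_ne (chiSqRisk P n) ⊤ with htop | htop
  · exact ⟨Kernel.deterministic (fun x => x ⟨0, by omega⟩) (measurable_pi_apply _), inferInstance,
      by simp [htop]⟩
  · obtain ⟨⟨κ, hκ⟩, h⟩ := iInf_lt_iff.1 (ENNReal.lt_add_right htop hε)
    exact ⟨κ, hκ, h.le⟩

/-- Amplification via learning: product classes.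
For a product class `𝒫 = ∏_{j=1}^d 𝒫_j` of distributions on `∏_j 𝒳_j`, any even
`n ≥ 2` and any `m ≥ 0`,
`ε*(𝒫, n, m) ≤ sqrt((m²/n) · Σ_{j=1}^d r_{χ²}(𝒫_j, n/2))`. -/
theorem ampErr_le_sqrt_sum_chiSqRisk_of_product
    {d : ℕ} {X : Fin d → Type*} [∀ j, MeasurableSpace (X j)]
    {Θ : Fin d → Type*} (p : ∀ j, Θ j → Measure (X j))
    (hp : ∀ j t, IsProbabilityMeasure (p j t))
    (n m : ℕ) (hn : 2 ≤ n) (hev : Even n) :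
    ENNReal.ofReal
        (ampErr (fun θ : (∀ j, Θ j) => Measure.pi fun j => p j (θ j)) n m) ≤
      ((m : ℝ≥0∞) ^ 2 / (n : ℝ≥0∞) * ∑ j : Fin d, chiSqRisk (p j) (n / 2)) ^
        ((1 : ℝ) / 2) := by
  obtain ⟨h, rfl⟩ := hev
  have hh : h ≠ 0 := by omega
  rw [show (h + h) / 2 = h by omega, one_div, ENNReal.le_rpow_inv_iff two_pos, ENNReal.rpow_ofNat]
  set c : ℝ≥0∞ := (m : ℝ≥0∞) ^ 2 / (h + h : ℕ)
  have hctop : c ≠ ⊤ :=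
    ENNReal.div_ne_top (by finiteness) (by exact_mod_cast (by omega : h + h ≠ 0))
  have hle : ∀ ε : ℝ≥0∞, ε ≠ 0 → ENNReal.ofReal (ampErr (fun θ : ∀ j, Θ j =>
      Measure.pi fun j => p j (θ j)) (h + h) m) ^ 2 ≤
        c * ∑ j, chiSqRisk (p j) h + c * d * ε := by
    intro ε hε
    choose κ hκ hκle using fun j => exists_forall_kernel_le_chiSqRisk_add (p j) hh hε
    have hb := ofReal_ampErr_pi_le p hp hh m κ
    rw [one_div, ENNReal.le_rpow_inv_iff two_pos, ENNReal.rpow_ofNat] at hb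
    refine hb.trans ?_
    calc c * ∑ j, ⨆ t, ∫⁻ x, chiSqDiv (κ j x) (p j t) ∂(Measure.pi fun _ : Fin h => p j t)
        ≤ c * ∑ j, (chiSqRisk (p j) h + ε) := by gcongr with j; exact hκle j
      _ = _ := by
        rw [Finset.sum_add_distrib, mul_add, Finset.sum_const, Finset.card_univ, Fintype.card_fin,
          nsmul_eq_mul, mul_assoc]
  have hlim : Filter.Tendsto (fun ε : ℝ≥0∞ => c * ∑ j, chiSqRisk (p j) h + c * d * ε)
      (nhdsWithin 0 {0}ᶜ) (nhds (c * ∑ j, chiSqRisk (p j) h + c * d * 0)) :=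
    ((ENNReal.Tendsto.const_mul Filter.tendsto_id (Or.inr (by finiteness))).const_add
      _).mono_left nhdsWithin_le_nhds
  rw [mul_zero, add_zero] at hlim
  exact ge_of_tendsto hlim (eventually_nhdsWithin_of_forall hle)
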